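/- Let A = diag(Ni/(N+1), −(i/(N+1)) I_N) ∈ su(N+1) and let 𝐪 : ℝ² → ℂ^N be a smooth row-vector-valued function of (x,t); set q := ⟦𝐪⟧ : ℝ² → su(N+1). Then q satisfies the Fordy–Kulish NLS flow (1/(2N)) ∂_t q = −[A, ∂_x² q] + (1/2)[q,[q,[A,q]]] if and only if 𝐪 satisfies the U(N)-invariant vector NLS equation (1/(2N)) ∂_t 𝐪 = −i(∂_x² 𝐪 + 2(𝐪̄·𝐪)𝐪). In particular, [⟦𝐪⟧, [⟦𝐪⟧, [A, ⟦𝐪⟧]]] = ⟦−4i(𝐪̄·𝐪)𝐪⟧. -/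

import Mathlib

open Matrix

attribute [local instance]
  Matrix.linftyOpNormedAddCommGroup Matrix.linftyOpNormedSpace
  Matrix.linftyOpNormedRing Matrix.linftyOpNormedAlgebra

/-- The embedding of a row vector `a ∈ ℂ^N` as the su(N+1) matrix
`⟦a⟧ = [[0, a],[−āᵀ, 0]]`. -/
noncomputable def mE {N : ℕ} (a : Fin N → ℂ) :
    Matrix (Fin 1 ⊕ Fin N) (Fin 1 ⊕ Fin N) ℂ :=
  Matrix.fromBlocks 0 (Matrix.of fun _ j => a j)
    (Matrix.of fun i _ => -(starRingEnd ℂ) (a i)) 0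

/-- The distinguished element `A = diag(Ni/(N+1), −(i/(N+1)) I_N)` of su(N+1). -/
noncomputable def Amat (N : ℕ) :
    Matrix (Fin 1 ⊕ Fin N) (Fin 1 ⊕ Fin N) ℂ :=
  Matrix.fromBlocks (Matrix.of fun _ _ => (N : ℂ) * Complex.I / ((N : ℂ) + 1)) 0 0
    ((-Complex.I / ((N : ℂ) + 1)) • (1 : Matrix (Fin N) (Fin N) ℂ))

/-- The Hermitian dot product `ā·b = Σ_k ā_k b_k` on `ℂ^N`. -/
noncomputable def dotc {N : ℕ} (a b : Fin N → ℂ) : ℂ :=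
  ∑ k, (starRingEnd ℂ) (a k) * b k

/-- The embedding `a ↦ ⟦a⟧` as a real-linear map. -/
noncomputable def mELinearMap (N : ℕ) :
    (Fin N → ℂ) →ₗ[ℝ] Matrix (Fin 1 ⊕ Fin N) (Fin 1 ⊕ Fin N) ℂ where
  toFun := mE
  map_add' a b := by
    ext (i | i) (j | j) <;> simp [mE, add_comm]
  map_smul' r a := by
    ext (i | i) (j | j) <;> simp [mE]

theorem mE_add {N : ℕ} (a b : Fin N → ℂ) : mE (a + b) = mE a + mE b :=
  (mELinearMap N).map_add a b

theorem mE_neg {N : ℕ} (a : Fin N → ℂ) : mE (-a) = -mE a :=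
  (mELinearMap N).map_neg a

theorem mE_smul {N : ℕ} (r : ℝ) (a : Fin N → ℂ) : mE (r • a) = r • mE a :=
  (mELinearMap N).map_smul r a

theorem mE_injective {N : ℕ} : Function.Injective (mE (N := N)) := by
  intro a b h
  funext j
  simpa [mE] using congrFun (congrFun h (Sum.inl 0)) (Sum.inr j)

theorem deriv_mE {N : ℕ} {f : ℝ → Fin N → ℂ} {t : ℝ} (hf : DifferentiableAt ℝ f t) :
    deriv (fun s => mE (f s)) t = mE (deriv f t) :=
  ((mELinearMap N).toContinuousLinearMap.hasFDerivAt.comp_hasDerivAt t hf.hasDerivAt).deriv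

theorem lie_Amat_mE {N : ℕ} (a : Fin N → ℂ) : ⁅Amat N, mE a⁆ = mE (Complex.I • a) := by
  have hN : (N : ℂ) + 1 ≠ 0 := Nat.cast_add_one_ne_zero N
  rw [Ring.lie_def, Amat, mE, mE, fromBlocks_multiply, fromBlocks_multiply]
  ext (i | i) (j | j)
  · simp
  · simp [Matrix.mul_apply]
    field_simp
    ring
  · simp [Matrix.mul_apply]
    field_simp
    ring
  · simp

theorem lie_mE_lie_mE_smul_I {N : ℕ} (a : Fin N → ℂ) :
    ⁅mE a, ⁅mE a, mE (Complex.I • a)⁆⁆ = mE ((-4 * Complex.I * dotc a a) • a) := by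
  have key : ⁅mE a, mE (Complex.I • a)⁆ =
      fromBlocks (of fun _ _ => 2 * Complex.I * dotc a a) 0 0
        (of fun i j => -2 * Complex.I * (starRingEnd ℂ (a i) * a j)) := by
    rw [Ring.lie_def, mE, mE, fromBlocks_multiply, fromBlocks_multiply]
    ext (i | i) (j | j)
    · simp only [Matrix.sub_apply, fromBlocks_apply₁₁, Matrix.mul_apply, dotc,
        of_apply, Finset.mul_sum, Pi.smul_apply, smul_eq_mul, map_mul, Complex.conj_I,
        mul_zero, zero_add, ← Finset.sum_sub_distrib]
      exact Finset.sum_congr rfl fun k _ => by ring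
    · simp
    · simp
    · simp [Matrix.mul_apply]
      ring
  have hconj : starRingEnd ℂ (dotc a a) = dotc a a := by
    simp [dotc, mul_comm]
  have hfour : starRingEnd ℂ 4 = 4 := Complex.conj_ofNat 4
  rw [key, Ring.lie_def, mE, mE, fromBlocks_multiply, fromBlocks_multiply]
  ext (i | i) (j | j)
  · simp
  · have h : ∑ k, a k * (-2 * Complex.I * (starRingEnd ℂ (a k) * a j)) =
        -2 * Complex.I * dotc a a * a j := by
      simp only [dotc, Finset.mul_sum, Finset.sum_mul]
      exact Finset.sum_congr rfl fun k _ => by ring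
    simp [Matrix.mul_apply] at h ⊢
    rw [h]
    ring
  · have h : ∑ k, -2 * Complex.I * (starRingEnd ℂ (a i) * a k) * -starRingEnd ℂ (a k) =
        2 * Complex.I * dotc a a * starRingEnd ℂ (a i) := by
      simp only [dotc, Finset.mul_sum, Finset.sum_mul]
      exact Finset.sum_congr rfl fun k _ => by ring
    simp [Matrix.mul_apply, hconj, hfour] at h ⊢
    rw [h]
    ring
  · simp

/-- `q = ⟦qv⟧` satisfies the Fordy–Kulish NLS flow iff `qv`
satisfies the U(N)-invariant vector NLS equation; in particular
`[⟦qv⟧,[⟦qv⟧,[A,⟦qv⟧]]] = ⟦−4i(qv̄·qv)qv⟧`. -/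
theorem su_vector_NLS_correspondence {N : ℕ}
    (qv : ℝ → ℝ → Fin N → ℂ)
    (hsm : ContDiff ℝ (⊤ : ℕ∞) (fun p : ℝ × ℝ => qv p.1 p.2)) :
    ((∀ x t : ℝ,
        (1 / (2 * (N : ℝ))) • deriv (fun t' => mE (qv x t')) t
          = -⁅Amat N, deriv (fun x' => deriv (fun x'' => mE (qv x'' t)) x') x⁆
            + (1/2 : ℝ) •
                ⁅mE (qv x t), ⁅mE (qv x t), ⁅Amat N, mE (qv x t)⁆⁆⁆)
      ↔
      (∀ x t : ℝ,
        (1 / (2 * (N : ℝ))) • deriv (fun t' => qv x t') t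
          = -Complex.I • (deriv (fun x' => deriv (fun x'' => qv x'' t) x') x
              + (2 * dotc (qv x t) (qv x t)) • qv x t))) ∧
    (∀ x t : ℝ,
      ⁅mE (qv x t), ⁅mE (qv x t), ⁅Amat N, mE (qv x t)⁆⁆⁆
        = mE ((-4 * Complex.I * dotc (qv x t) (qv x t)) • qv x t)) := by
  have cubic (a : Fin N → ℂ) :
      ⁅mE a, ⁅mE a, ⁅Amat N, mE a⁆⁆⁆ = mE ((-4 * Complex.I * dotc a a) • a) := by
    rw [lie_Amat_mE, lie_mE_lie_mE_smul_I]
  refine ⟨forall_congr' fun x => forall_congr' fun t => ?_, fun x t => cubic _⟩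
  have ht : ContDiff ℝ (⊤ : ℕ∞) fun t' => qv x t' :=
    hsm.comp (contDiff_const.prodMk contDiff_id)
  have hx : ContDiff ℝ (⊤ : ℕ∞) fun x' => qv x' t :=
    hsm.comp (contDiff_id.prodMk contDiff_const)
  have hx' : ContDiff ℝ (⊤ : ℕ∞) (deriv fun x' => qv x' t) :=
    (contDiff_infty_iff_deriv.mp hx).2
  have dt : deriv (fun t' => mE (qv x t')) t = mE (deriv (fun t' => qv x t') t) :=
    deriv_mE (ht.differentiable (by simp) t)
  have dx : (fun x' => deriv (fun x'' => mE (qv x'' t)) x') =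
      fun x' => mE (deriv (fun x'' => qv x'' t) x') :=
    funext fun x' => deriv_mE (hx.differentiable (by simp) x')
  rw [cubic, dt, dx, deriv_mE (hx'.differentiable (by simp) x), lie_Amat_mE,
    ← mE_smul, ← mE_smul, ← mE_neg, ← mE_add, mE_injective.eq_iff]
  refine Eq.congr_right ?_
  funext j
  simp
  ring
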